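/- For every β ∈ (1,2], the β-shift X_β and its associated S-gap shift ASS(X_β) = X(S), S = {i − 1 : i ∈ ℕ, a_i = 1}, have equal topological entropy: h(X_β) = h(X(S)). -/

import Mathlib

/-! ## Basic symbolic dynamics over `ℤ` -/

/-- The shift map on bi-infinite sequences. -/
def shiftMap {A : Type} (x : ℤ → A) : ℤ → A := fun i => x (i + 1)

/-- The word `w` occurs in `x` starting at coordinate `i`. -/
def occursAt {A : Type} (w : List A) (x : ℤ → A) (i : ℤ) : Prop :=
  ∀ (k : ℕ) (h : k < w.length), x (i + k) = w.get ⟨k, h⟩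

/-- The word `w` occurs somewhere in `x`. -/
def occursIn {A : Type} (w : List A) (x : ℤ → A) : Prop := ∃ i : ℤ, occursAt w x i

/-- The word `w` belongs to the language of `X`. -/
def InLang {A : Type} (X : Set (ℤ → A)) (w : List A) : Prop := ∃ x ∈ X, occursIn w x

/-- `X` is a subshift: it is defined by a set of forbidden words. -/
def IsSubshift {A : Type} (X : Set (ℤ → A)) : Prop :=
  ∃ F : Set (List A), X = { x | ∀ w ∈ F, ¬ occursIn w x }

/-- `X` is a shift of finite type: defined by a finite set of forbidden words. -/
def IsSFT {A : Type} (X : Set (ℤ → A)) : Prop :=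
  ∃ F : Finset (List A), X = { x | ∀ w ∈ F, ¬ occursIn w x }

/-- `φ` is a sliding block code on `X` (with some memory `m` and anticipation `n`). -/
def IsSliding {A B : Type} (X : Set (ℤ → A)) (φ : (ℤ → A) → ℤ → B) : Prop :=
  ∃ m n : ℕ, ∀ x ∈ X, ∀ y ∈ X, ∀ i : ℤ,
    (∀ j : ℤ, i - (m : ℤ) ≤ j → j ≤ i + (n : ℤ) → x j = y j) → φ x i = φ y i

/-- `φ` is a factor code from `X` onto `Y`. -/
def IsFactorCode {A B : Type} (X : Set (ℤ → A)) (Y : Set (ℤ → B))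
    (φ : (ℤ → A) → ℤ → B) : Prop :=
  IsSliding X φ ∧ (∀ x ∈ X, φ x ∈ Y) ∧ (∀ y ∈ Y, ∃ x ∈ X, φ x = y) ∧
    (∀ x ∈ X, φ (shiftMap x) = shiftMap (φ x))

/-- `X` and `Y` are topologically conjugate (via mutually inverse sliding block codes). -/
def TopConjugate {A B : Type} (X : Set (ℤ → A)) (Y : Set (ℤ → B)) : Prop :=
  ∃ (φ : (ℤ → A) → ℤ → B) (ψ : (ℤ → B) → ℤ → A),
    IsFactorCode X Y φ ∧ IsFactorCode Y X ψ ∧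
    (∀ x ∈ X, ψ (φ x) = x) ∧ (∀ y ∈ Y, φ (ψ y) = y)

/-- `φ` is a right-resolving (1-block) code on `X`: it is induced by a symbol map `Φ`
such that whenever `ab` and `ac` are 2-blocks of `X` with `Φ b = Φ c`, then `b = c`. -/
def IsRightResolvingCode {A B : Type} (X : Set (ℤ → A)) (φ : (ℤ → A) → ℤ → B) : Prop :=
  ∃ Φ : A → B, (∀ x ∈ X, ∀ i : ℤ, φ x i = Φ (x i)) ∧
    ∀ a b c : A, InLang X [a, b] → InLang X [a, c] → Φ b = Φ c → b = c

/-- `x` is a doubly transitive point of `X`. -/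
def DoublyTransitive {A : Type} (X : Set (ℤ → A)) (x : ℤ → A) : Prop :=
  ∀ w : List A, InLang X w →
    (∀ N : ℤ, ∃ i ≥ N, occursAt w x i) ∧ (∀ N : ℤ, ∃ i ≤ N, occursAt w x i)

/-- `φ : W → Y` is one-to-one almost everywhere: every doubly transitive point of `Y`
has exactly one preimage in `W`. -/
def OneOneAE {A B : Type} (W : Set (ℤ → A)) (Y : Set (ℤ → B))
    (φ : (ℤ → A) → ℤ → B) : Prop :=
  ∀ y ∈ Y, DoublyTransitive Y y → ∃! x, x ∈ W ∧ φ x = y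

/-- `φ` is finite-to-one on `W` (uniformly bounded fibers). -/
def FiniteToOne {A B : Type} (W : Set (ℤ → A)) (φ : (ℤ → A) → ℤ → B) : Prop :=
  ∃ M : ℕ, ∀ y : ℤ → B, { x ∈ W | φ x = y }.Finite ∧ { x ∈ W | φ x = y }.ncard ≤ M

/-- `X` and `Y` are right-resolving almost conjugate. -/
def RRAlmostConjugate {A B : Type} (X : Set (ℤ → A)) (Y : Set (ℤ → B)) : Prop :=
  ∃ (C : Type) (_ : Finite C) (W : Set (ℤ → C))
    (φX : (ℤ → C) → ℤ → A) (φY : (ℤ → C) → ℤ → B),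
    IsSFT W ∧ IsFactorCode W X φX ∧ IsFactorCode W Y φY ∧
    IsRightResolvingCode W φX ∧ IsRightResolvingCode W φY ∧
    OneOneAE W X φX ∧ OneOneAE W Y φY

/-- `X` and `Y` are right-resolving finitely equivalent. -/
def RRFinEquiv {A B : Type} (X : Set (ℤ → A)) (Y : Set (ℤ → B)) : Prop :=
  ∃ (C : Type) (_ : Finite C) (W : Set (ℤ → C))
    (φX : (ℤ → C) → ℤ → A) (φY : (ℤ → C) → ℤ → B),
    IsSFT W ∧ IsFactorCode W X φX ∧ IsFactorCode W Y φY ∧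
    IsRightResolvingCode W φX ∧ IsRightResolvingCode W φY ∧
    FiniteToOne W φX ∧ FiniteToOne W φY

/-- An irreducible shift space. -/
def IrreducibleShift {A : Type} (X : Set (ℤ → A)) : Prop :=
  ∀ u w : List A, InLang X u → InLang X w → ∃ v : List A, InLang X (u ++ v ++ w)

/-- `v` is a synchronizing word for `X`. -/
def SynchronizingWord {A : Type} (X : Set (ℤ → A)) (v : List A) : Prop :=
  InLang X v ∧ ∀ u w : List A, InLang X (u ++ v) → InLang X (v ++ w) →
    InLang X (u ++ v ++ w)

/-- A synchronized system: an irreducible subshift with a synchronizing word. -/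
def Synchronized {A : Type} (X : Set (ℤ → A)) : Prop :=
  IsSubshift X ∧ IrreducibleShift X ∧ ∃ v : List A, SynchronizingWord X v

/-! ## S-gap shifts and β-shifts -/

/-- The S-gap shift `X(S)` for `S ⊆ ℕ ∪ {0}`: numbers of `0`s between successive `1`s
lie in `S`; `1`s occur infinitely often in both directions unless `S` is infinite. -/
def SGap (S : Set ℕ) : Set (ℤ → Fin 2) :=
  { x | (∀ i j : ℤ, i < j → x i = 1 → x j = 1 →
          (∀ k : ℤ, i < k → k < j → x k = 0) → (j - i - 1).toNat ∈ S) ∧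
        (S.Finite → (∀ N : ℤ, ∃ i ≥ N, x i = 1) ∧ (∀ N : ℤ, ∃ i ≤ N, x i = 1)) }

/-- Remainders of the (greedy) β-expansion of `1` with digits in `{0,1}`:
`betaRem β n = 1 - Σ_{i ≤ n} a_i β^{-i}`. -/
noncomputable def betaRem (β : ℝ) : ℕ → ℝ
  | 0 => 1
  | n + 1 => betaRem β n - (if β⁻¹ ^ (n + 1) ≤ betaRem β n then β⁻¹ ^ (n + 1) else 0)

/-- The digit `a_{n+1}` of the β-expansion `1_β = a_1 a_2 a_3 ⋯` of `1`. -/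
noncomputable def betaDigit (β : ℝ) (n : ℕ) : Fin 2 :=
  if β⁻¹ ^ (n + 1) ≤ betaRem β n then 1 else 0

/-- Lexicographic order on one-sided sequences. -/
def lexLE {A : Type} [LinearOrder A] (u v : ℕ → A) : Prop :=
  u = v ∨ ∃ n : ℕ, (∀ k < n, u k = v k) ∧ u n < v n

/-- The β-shift: `x ∈ X_β` iff every right tail of `x` is lexicographically `≤ 1_β`. -/
def betaShift (β : ℝ) : Set (ℤ → Fin 2) :=
  { x | ∀ i : ℤ, lexLE (fun n : ℕ => x (i + (n : ℤ))) (betaDigit β) }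

/-- The set `S = {i - 1 : a_i = 1}` of the associated S-gap shift `ASS(X_β) = X(S)`. -/
def assocS (β : ℝ) : Set ℕ := { n | betaDigit β n = 1 }

/-- Eventual periodicity of a sequence. -/
def EvPeriodic {α : Type} (a : ℕ → α) : Prop :=
  ∃ p : ℕ, 0 < p ∧ ∃ N : ℕ, ∀ n ≥ N, a (n + p) = a n

/-! ## Finite directed multigraphs, edge shifts, labeled graphs -/

structure FinGraph where
  V : Type
  E : Type
  [fintypeV : Fintype V]
  [fintypeE : Fintype E]
  src : E → V
  tgt : E → V

attribute [instance] FinGraph.fintypeV FinGraph.fintypeE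

/-- The edge shift of a graph. -/
def FinGraph.edgeShift (G : FinGraph) : Set (ℤ → G.E) :=
  { ξ | ∀ i : ℤ, G.tgt (ξ i) = G.src (ξ (i + 1)) }

structure GraphHom (G H : FinGraph) where
  vmap : G.V → H.V
  emap : G.E → H.E
  src_eq : ∀ e : G.E, H.src (emap e) = vmap (G.src e)
  tgt_eq : ∀ e : G.E, H.tgt (emap e) = vmap (G.tgt e)

structure GraphIso (G H : FinGraph) where
  vmap : G.V ≃ H.V
  emap : G.E ≃ H.E
  src_eq : ∀ e : G.E, H.src (emap e) = vmap (G.src e)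
  tgt_eq : ∀ e : G.E, H.tgt (emap e) = vmap (G.tgt e)

/-- `H ⪯ G` : the edge shift `X_H` is a right-resolving factor of `X_G`,
via a graph homomorphism whose restriction to each out-edge set is injective. -/
def RRFactorOf (H G : FinGraph) : Prop :=
  ∃ Φ : GraphHom G H,
    (∀ η ∈ H.edgeShift, ∃ ξ ∈ G.edgeShift, ∀ i : ℤ, Φ.emap (ξ i) = η i) ∧
    ∀ I : G.V, Set.InjOn Φ.emap { e : G.E | G.src e = I }

/-- `M` is the minimal right-resolving factor graph `M_G` of `G`: it is the smallest
element in the order `⪯` on graphs right-resolving-factoring from `G`. -/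
def IsMinFactorGraph (M G : FinGraph) : Prop :=
  RRFactorOf M G ∧ ∀ H : FinGraph, RRFactorOf H G → RRFactorOf M H

/-- The nested sequence of equivalence relations `∼ₙ` on vertices of `G` whose limiting
partition gives the states of `M_G`. -/
def simRel (G : FinGraph) : ℕ → G.V → G.V → Prop
  | 0, _, _ => True
  | n + 1, I, J => ∀ K : G.V,
      { e : G.E | G.src e = I ∧ simRel G n (G.tgt e) K }.ncard =
      { e : G.E | G.src e = J ∧ simRel G n (G.tgt e) K }.ncard

/-- The limiting equivalence relation; its classes are the states of `M_G`. -/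
def simLim (G : FinGraph) (I J : G.V) : Prop := ∀ n : ℕ, simRel G n I J

/-- A labeled graph over the alphabet `A`. -/
structure LGraph (A : Type) where
  G : FinGraph
  label : G.E → A

def LGraph.RightResolving {A : Type} (𝒢 : LGraph A) : Prop :=
  ∀ e f : 𝒢.G.E, 𝒢.G.src e = 𝒢.G.src f → 𝒢.label e = 𝒢.label f → e = f

/-- `𝒢` presents the shift space `X`: `X = ℒ_∞(X_G)`. -/
def LGraph.Presents {A : Type} (𝒢 : LGraph A) (X : Set (ℤ → A)) : Prop :=
  X = { x | ∃ ξ ∈ 𝒢.G.edgeShift, ∀ i : ℤ, 𝒢.label (ξ i) = x i }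

def FinGraph.Irreducible (G : FinGraph) : Prop :=
  ∀ I J : G.V, Relation.ReflTransGen (fun u v => ∃ e : G.E, G.src e = u ∧ G.tgt e = v) I J

/-- A sofic shift: one presented by a finite labeled graph. -/
def IsSofic {A : Type} (X : Set (ℤ → A)) : Prop := ∃ 𝒢 : LGraph A, 𝒢.Presents X

/-- The Fischer cover: the minimal right-resolving presentation of an irreducible
sofic shift. -/
def IsFischerCover {A : Type} (𝒢 : LGraph A) (X : Set (ℤ → A)) : Prop :=
  𝒢.G.Irreducible ∧ 𝒢.RightResolving ∧ 𝒢.Presents X ∧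
    ∀ ℋ : LGraph A, ℋ.RightResolving → ℋ.Presents X →
      Fintype.card 𝒢.G.V ≤ Fintype.card ℋ.G.V

/-! ## Countable labeled graphs (for almost Markov systems) -/

structure CtblLGraph (A : Type) where
  V : Type
  E : Type
  ctblV : Countable V
  ctblE : Countable E
  src : E → V
  tgt : E → V
  label : E → A

def CtblLGraph.RightResolving {A : Type} (𝒢 : CtblLGraph A) : Prop :=
  ∀ e f : 𝒢.E, 𝒢.src e = 𝒢.src f → 𝒢.label e = 𝒢.label f → e = f

def CtblLGraph.Irreducible {A : Type} (𝒢 : CtblLGraph A) : Prop :=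
  ∀ I J : 𝒢.V, Relation.ReflTransGen (fun u v => ∃ e : 𝒢.E, 𝒢.src e = u ∧ 𝒢.tgt e = v) I J

/-- `w` is the label of some finite path in `𝒢`. -/
def CtblLGraph.IsPathLabel {A : Type} (𝒢 : CtblLGraph A) (w : List A) : Prop :=
  ∃ es : List 𝒢.E, es.map 𝒢.label = w ∧ es.Chain' (fun e f => 𝒢.tgt e = 𝒢.src f)

/-- `𝒢` presents `X` (on the level of languages). -/
def CtblLGraph.PresentsLang {A : Type} (𝒢 : CtblLGraph A) (X : Set (ℤ → A)) : Prop :=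
  ∀ w : List A, InLang X w ↔ 𝒢.IsPathLabel w

/-- An almost Markov system: it has a right-resolving presentation by a countable
irreducible labeled graph. -/
def AlmostMarkov {A : Type} (X : Set (ℤ → A)) : Prop :=
  ∃ 𝒢 : CtblLGraph A, 𝒢.RightResolving ∧ 𝒢.Irreducible ∧ 𝒢.PresentsLang X

/-! ## Words `𝒟(S)`, primitivity -/

/-- The word `𝒟(S) = d_1 d_2 ⋯ d_{k-2} (d_{k-1} + s_0 + 1)` for `S = {s_0 < ⋯ < s_{k-1}}`
enumerated by `s`. -/
def DSword (k : ℕ) (s : ℕ → ℕ) : List ℕ :=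
  (List.range (k - 1)).map fun i =>
    if i + 2 < k then s (i + 1) - s i else s (i + 1) - s i + s 0 + 1

/-- The word `𝒟(S)` of a finite set `S = {s_0 < s_1 < ⋯ < s_{k-1}}` of naturals. -/
def gapWord (F : Finset ℕ) : List ℕ :=
  let l := F.sort (· ≤ ·)
  (List.range (l.length - 1)).map fun i =>
    if i + 2 < l.length then l.getD (i + 1) 0 - l.getD i 0
    else l.getD (i + 1) 0 - l.getD i 0 + l.getD 0 0 + 1

/-- `q` is a period of the word `w` (in the sense `w = u^{|w|/q}` with `|u| = q`). -/
def ListPeriod (w : List ℕ) (q : ℕ) : Prop :=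
  0 < q ∧ q ∣ w.length ∧ ∀ i : ℕ, i + q < w.length → w.getD i 0 = w.getD (i + q) 0

/-- A word is primitive if its least period equals its length. -/
def ListPrimitive (w : List ℕ) : Prop := ∀ q : ℕ, ListPeriod w q → q = w.length

/-! ## Entropy, periodic points and zeta functions -/

/-- The number of words of length `n` in the language of `X`. -/
noncomputable def wordCount {A : Type} (X : Set (ℤ → A)) (n : ℕ) : ℕ :=
  { w : List A | w.length = n ∧ InLang X w }.ncard

/-- `X` has topological entropy `h`, i.e. `(1/n) log |ℬ_n(X)| → h`. -/
def HasEntropy {A : Type} (X : Set (ℤ → A)) (h : ℝ) : Prop :=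
  Filter.Tendsto (fun n : ℕ => Real.log (wordCount X n) / n) Filter.atTop (nhds h)

/-- The topological entropy of `X`. -/
noncomputable def entropy {A : Type} (X : Set (ℤ → A)) : ℝ :=
  Filter.atTop.limsup fun n : ℕ => Real.log (wordCount X n) / n

/-- The set of points of `X` of period `n`. -/
def perPts {A : Type} (X : Set (ℤ → A)) (n : ℕ) : Set (ℤ → A) :=
  { x ∈ X | shiftMap^[n] x = x }

/-- `p_n`, the number of points of period `n`. -/
noncomputable def pcount {A : Type} (X : Set (ℤ → A)) (n : ℕ) : ℕ := (perPts X n).ncard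

/-- The exponential of a formal power series (intended for zero constant term). -/
noncomputable def expPS (g : PowerSeries ℚ) : PowerSeries ℚ :=
  PowerSeries.mk fun n =>
    ∑ k ∈ Finset.range (n + 1), (PowerSeries.coeff n (g ^ k)) / (Nat.factorial k : ℚ)

/-- The Artin–Mazur zeta function `ζ_σ(t) = exp (Σ_{n ≥ 1} (p_n / n) tⁿ)` of `X`. -/
noncomputable def zetaPS {A : Type} (X : Set (ℤ → A)) : PowerSeries ℚ :=
  expPS (PowerSeries.mk fun n => if n = 0 then 0 else (pcount X n : ℚ) / (n : ℚ))

/-! ## Continued fractions parametrization of S-gap shifts -/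

/-- The value of a finite continued fraction `[a_0; a_1, …, a_n]`. -/
def cfVal : List ℕ → ℚ
  | [] => 0
  | [a] => (a : ℚ)
  | a :: rest => (a : ℚ) + 1 / cfVal rest

/-- The sequence `d_0 = s_0`, `d_n = s_n - s_{n-1}` of gap differences of `S`. -/
noncomputable def dSeq (S : Set ℕ) (n : ℕ) : ℕ :=
  if n = 0 then Nat.nth (· ∈ S) 0 else Nat.nth (· ∈ S) n - Nat.nth (· ∈ S) (n - 1)

open scoped Classical in
/-- The real number `x_S = [d_0; d_1, d_2, …]` assigned to the S-gap shift `X(S)`. -/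
noncomputable def xOf (S : Set ℕ) : ℝ :=
  if hS : S.Finite then ((cfVal ((List.range hS.toFinset.card).map (dSeq S)) : ℚ) : ℝ)
  else Filter.atTop.limsup fun n : ℕ =>
    ((cfVal ((List.range (n + 1)).map (dSeq S)) : ℚ) : ℝ)

/-! Both shifts count the same concatenations. A word of `X_β`, compared with `1_β`, first departs
from it by a `0` at a place `m` where `1_β` has a `1`; the block `a_1 ⋯ a_m 0` read so far has
`m ∈ S`, and any word of `X_β` may follow it, because no tail of `1_β` exceeds `1_β`. Likewise, a
word of `X(S)` following a `1` first departs from `000⋯` by a `1` at some `m ∈ S`; the block `0^m 1`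
also has length `m + 1`, and any word that may follow a `1` may follow it. Hence both counting
functions satisfy `u n = Σ_{m ∈ S, m < n} u (n - m - 1) + ε n` with `ε n ∈ {0, 1}`, and two
solutions of this recursion differ by a factor of at most `n + 1`, which the exponential growth rate
does not see. That the growth rate is a limit is Fekete's lemma. -/

open Filter Topology

/-! ## Occurrences of words -/

section Occurrences

variable {A : Type} {X : Set (ℤ → A)} {x : ℤ → A} {i : ℤ} {u w : List A}

lemma occursAt_nil : occursAt [] x i := fun _ hk => absurd hk (Nat.not_lt_zero _)

lemma occursAt_cons {c : A} : occursAt (c :: w) x i ↔ x i = c ∧ occursAt w x (i + 1) := by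
  refine ⟨fun h => ⟨by simpa using h 0 (by simp), fun k hk => ?_⟩, fun ⟨hc, hw⟩ k hk => ?_⟩
  · simpa [add_assoc, add_comm (1 : ℤ)] using h (k + 1) (by simpa using hk)
  · cases k with
    | zero => simpa using hc
    | succ k => simpa [add_assoc, add_comm (1 : ℤ)] using hw k (by simpa using hk)

lemma occursAt_append :
    occursAt (u ++ w) x i ↔ occursAt u x i ∧ occursAt w x (i + u.length) := by
  induction u generalizing i with
  | nil => simp [occursAt_nil]
  | cons c u ih => simp [occursAt_cons, ih, and_assoc, add_assoc, add_comm (1 : ℤ)]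

lemma occursAt_map_range {p : ℕ → A} {m : ℕ} :
    occursAt ((List.range m).map p) x i ↔ ∀ k < m, x (i + k) = p k := by
  simp [occursAt]

lemma InLang.of_append_left (h : InLang X (u ++ w)) : InLang X u := by
  obtain ⟨x, hx, i, hi⟩ := h
  exact ⟨x, hx, i, (occursAt_append.1 hi).1⟩

lemma InLang.of_append_right (h : InLang X (u ++ w)) : InLang X w := by
  obtain ⟨x, hx, i, hi⟩ := h
  exact ⟨x, hx, _, (occursAt_append.1 hi).2⟩

end Occurrences

/-! ## Entropy and subexponential factors -/

section Entropy

variable {A B : Type} {X : Set (ℤ → A)} {Y : Set (ℤ → B)} {h : ℝ}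

/-- The words of length `n` of the language `W`; for `W = {w | InLang X w}` these are the words
counted by `wordCount X n`. -/
def wordsOfLength (W : Set (List A)) (n : ℕ) : Set (List A) := {w | w.length = n ∧ w ∈ W}

lemma wordsOfLength_finite [Finite A] (W : Set (List A)) (n : ℕ) : (wordsOfLength W n).Finite :=
  (List.finite_length_eq A n).subset fun _ hw => hw.1

lemma wordCount_add_le [Finite A] (X : Set (ℤ → A)) (m n : ℕ) :
    wordCount X (m + n) ≤ wordCount X m * wordCount X n := by
  let L := wordsOfLength {w | InLang X w}
  have maps : Set.MapsTo (fun w => (w.take m, w.drop m)) (L (m + n)) (L m ×ˢ L n) := by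
    rintro w ⟨hlen, hw⟩
    rw [Set.mem_ofPred_eq, ← List.take_append_drop m w] at hw
    exact ⟨⟨by simp [hlen], hw.of_append_left⟩, ⟨by simp [hlen], hw.of_append_right⟩⟩
  have inj : Set.InjOn (fun w => (w.take m, w.drop m)) (L (m + n)) := by
    intro v _ w _ hvw
    obtain ⟨htake, hdrop⟩ := Prod.mk.inj hvw
    rw [← List.take_append_drop m v, htake, hdrop, List.take_append_drop]
  calc (L (m + n)).ncard
      ≤ (L m ×ˢ L n).ncard := Set.ncard_le_ncard_of_injOn _ maps inj
        ((wordsOfLength_finite _ m).prod (wordsOfLength_finite _ n))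
    _ = (L m).ncard * (L n).ncard := Set.ncard_prod

-- The case `a = 0` relies on `Real.log 0 = 0`.
lemma log_natCast_le_add_of_le_mul {a b c : ℕ} (h : a ≤ b * c) :
    Real.log a ≤ Real.log b + Real.log c := by
  rcases Nat.eq_zero_or_pos a with rfl | ha
  · simpa using add_nonneg (Real.log_natCast_nonneg b) (Real.log_natCast_nonneg c)
  · obtain ⟨hb, hc⟩ := Nat.mul_ne_zero_iff.1 (ha.trans_le h).ne'
    rw [← Real.log_mul (by exact_mod_cast hb) (by exact_mod_cast hc)]
    exact Real.log_le_log (by exact_mod_cast ha) (by exact_mod_cast h)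

theorem exists_hasEntropy [Finite A] (X : Set (ℤ → A)) : ∃ h, HasEntropy X h := by
  have subadd : Subadditive fun n => Real.log (wordCount X n) :=
    fun m n => log_natCast_le_add_of_le_mul (wordCount_add_le X m n)
  have bdd : BddBelow (Set.range fun n : ℕ => Real.log (wordCount X n) / n) :=
    ⟨0, by rintro _ ⟨n, rfl⟩; exact div_nonneg (Real.log_natCast_nonneg _) n.cast_nonneg⟩
  exact ⟨subadd.lim, subadd.tendsto_lim bdd⟩

theorem HasEntropy.of_wordCount_le_mul {c : ℕ → ℕ}
    (hc : Tendsto (fun n : ℕ => Real.log (c n) / n) atTop (𝓝 0)) (hX : HasEntropy X h)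
    (hXY : ∀ n, wordCount X n ≤ c n * wordCount Y n)
    (hYX : ∀ n, wordCount Y n ≤ c n * wordCount X n) : HasEntropy Y h := by
  have lower := hX.sub hc
  have upper := hX.add hc
  rw [sub_zero] at lower
  rw [add_zero] at upper
  refine tendsto_of_tendsto_of_tendsto_of_le_of_le lower upper (fun n => ?_) (fun n => ?_)
  · rw [← sub_div]
    have := log_natCast_le_add_of_le_mul (hXY n)
    gcongr
    linarith
  · rw [← add_div]
    have := log_natCast_le_add_of_le_mul (hYX n)
    gcongr
    linarith

lemma tendsto_log_succ_pow_div_atTop (k : ℕ) :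
    Tendsto (fun n : ℕ => Real.log ((n + 1) ^ k : ℕ) / n) atTop (𝓝 0) := by
  have hlog : Tendsto (fun n : ℕ => Real.log (n + 1) / n) atTop (𝓝 0) := by
    simpa [Function.comp_def] using
      (Real.tendsto_pow_log_div_mul_add_atTop 1 (-1) 1 one_ne_zero).comp
        (tendsto_atTop_add_const_right _ (1 : ℝ) tendsto_natCast_atTop_atTop)
  simpa [mul_div_assoc] using hlog.const_mul (k : ℝ)

end Entropy

/-! ## Renewal languages -/

section Renewal

variable {p q : ℕ → Fin 2} {S : Set ℕ} {V W : Set (List (Fin 2))} {m : ℕ}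

/-- The binary word that follows the sequence `p` for `m` letters, departs from it at the next
letter, and goes on with `v`. -/
def departure (p : ℕ → Fin 2) (m : ℕ) (v : List (Fin 2)) : List (Fin 2) :=
  (List.range m).map p ++ (1 - p m) :: v

lemma departure_zero (p : ℕ → Fin 2) (v : List (Fin 2)) : departure p 0 v = (1 - p 0) :: v := rfl

lemma departure_succ (p : ℕ → Fin 2) (m : ℕ) (v : List (Fin 2)) :
    departure p (m + 1) v = p 0 :: departure (fun k => p (k + 1)) m v := by
  simp [departure, List.range_succ_eq_map, Function.comp_def]

lemma length_departure (p : ℕ → Fin 2) (m : ℕ) (v : List (Fin 2)) :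
    (departure p m v).length = v.length + (m + 1) := by
  simp only [departure, List.length_append, List.length_map, List.length_range, List.length_cons]
  omega

lemma occursAt_departure {v : List (Fin 2)} {x : ℤ → Fin 2} {i : ℤ} :
    occursAt (departure p m v) x i ↔
      (∀ k < m, x (i + k) = p k) ∧ x (i + m) = 1 - p m ∧ occursAt v x (i + m + 1) := by
  simp [departure, occursAt_append, occursAt_map_range, occursAt_cons]

lemma departure_inj {m' : ℕ} {v v' : List (Fin 2)} :
    departure p m v = departure p m' v' ↔ m = m' ∧ v = v' := by
  have one_sub_ne : ∀ c : Fin 2, 1 - c ≠ c := by decide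
  induction m generalizing p m' with
  | zero =>
    cases m' with
    | zero => simp [departure_zero]
    | succ m' => simp [departure_zero, departure_succ, one_sub_ne]
  | succ m ih =>
    cases m' with
    | zero => simp [departure_zero, departure_succ, (one_sub_ne _).symm]
    | succ m' => simp [departure_succ, ih]

lemma eq_map_range_or_departure (p : ℕ → Fin 2) (w : List (Fin 2)) :
    w = (List.range w.length).map p ∨ ∃ m v, w = departure p m v := by
  have eq_one_sub : ∀ c d : Fin 2, c ≠ d → c = 1 - d := by decide
  induction w generalizing p with
  | nil => simp
  | cons c w ih =>
    by_cases hc : c = p 0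
    · subst hc
      rcases ih fun k => p (k + 1) with hw | ⟨m, v, rfl⟩
      · left
        rw [List.length_cons, List.range_succ_eq_map, List.map_cons, List.map_map]
        exact congrArg _ hw
      · exact .inr ⟨m + 1, v, (departure_succ p m v).symm⟩
    · exact .inr ⟨0, w, by rw [departure_zero, ← eq_one_sub _ _ hc]⟩

open Classical in
lemma ncard_wordsOfLength_le_one_add_sum (h : ∀ m v, departure p m v ∈ V → m ∈ S ∧ v ∈ W)
    (n : ℕ) :
    (wordsOfLength V n).ncard ≤
      1 + ∑ m ∈ Finset.range n with m ∈ S, (wordsOfLength W (n - (m + 1))).ncard := by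
  let T : Finset ℕ := {m ∈ Finset.range n | m ∈ S}
  let U : Set (List (Fin 2)) := ⋃ m ∈ T, departure p m '' wordsOfLength W (n - (m + 1))
  have cover : wordsOfLength V n ⊆ insert ((List.range n).map p) U := by
    rintro w ⟨rfl, hw⟩
    refine (eq_map_range_or_departure p w).imp id ?_
    rintro ⟨m, v, rfl⟩
    obtain ⟨hm, hv⟩ := h m v hw
    simp only [U, T, length_departure, Set.mem_iUnion, Finset.mem_filter, Finset.mem_range]
    exact ⟨m, ⟨by omega, hm⟩, v, ⟨by omega, hv⟩, rfl⟩
  have finite_U : U.Finite := T.finite_toSet.biUnion fun m _ => (wordsOfLength_finite W _).image _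
  calc (wordsOfLength V n).ncard
      ≤ (insert ((List.range n).map p) U).ncard := Set.ncard_le_ncard cover (finite_U.insert _)
    _ ≤ 1 + U.ncard := by rw [add_comm]; exact Set.ncard_insert_le _ _
    _ ≤ 1 + ∑ m ∈ T, (departure p m '' wordsOfLength W (n - (m + 1))).ncard := by
      gcongr
      exact T.set_ncard_biUnion_le _
    _ ≤ 1 + ∑ m ∈ T, (wordsOfLength W (n - (m + 1))).ncard := by
      gcongr 1 + ?_
      exact Finset.sum_le_sum fun m _ => Set.ncard_image_le (wordsOfLength_finite W _)

open Classical in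
lemma sum_ncard_le_ncard_wordsOfLength (h : ∀ m ∈ S, ∀ v ∈ W, departure p m v ∈ V) (n : ℕ) :
    ∑ m ∈ Finset.range n with m ∈ S, (wordsOfLength W (n - (m + 1))).ncard ≤
      (wordsOfLength V n).ncard := by
  let T : Finset ℕ := {m ∈ Finset.range n | m ∈ S}
  let D : ℕ → Set (List (Fin 2)) := fun m => departure p m '' wordsOfLength W (n - (m + 1))
  have ncard_D (m : ℕ) : (D m).ncard = (wordsOfLength W (n - (m + 1))).ncard :=
    Set.ncard_image_of_injective _ fun _ _ hv => (departure_inj.1 hv).2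
  have finite_D : ∀ m ∈ (T : Set ℕ), (D m).Finite :=
    fun m _ => (wordsOfLength_finite W _).image _
  have disjoint_D : (T : Set ℕ).PairwiseDisjoint D := by
    refine fun m _ m' _ hne => Set.disjoint_left.2 ?_
    rintro _ ⟨v, _, rfl⟩ ⟨v', _, heq⟩
    exact hne (departure_inj.1 heq).1.symm
  have subset : ⋃ m ∈ (T : Set ℕ), D m ⊆ wordsOfLength V n := by
    refine Set.iUnion₂_subset fun m hm => ?_
    obtain ⟨hmn, hmS⟩ : m < n ∧ m ∈ S := by simpa [T] using hm
    rintro _ ⟨v, ⟨hlen, hv⟩, rfl⟩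
    exact ⟨by rw [length_departure]; omega, h m hmS v hv⟩
  calc ∑ m ∈ T, (wordsOfLength W (n - (m + 1))).ncard
      = (⋃ m ∈ (T : Set ℕ), D m).ncard := by
        rw [T.finite_toSet.ncard_biUnion finite_D disjoint_D, finsum_mem_coe_finset]
        simp only [ncard_D]
    _ ≤ (wordsOfLength V n).ncard := Set.ncard_le_ncard subset (wordsOfLength_finite V n)

/-- A language that consists of concatenations of the blocks `p 0 ⋯ p (m - 1) (1 - p m)` with
`m ∈ S`, followed by an initial word of `p`. Which initial words of `p` occur is left open, so `S`
determines the number of words of each length only up to a linear factor. -/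
structure IsRenewalLanguage (S : Set ℕ) (p : ℕ → Fin 2) (W : Set (List (Fin 2))) : Prop where
  nil_mem : [] ∈ W
  departure_mem_iff : ∀ m v, departure p m v ∈ W ↔ m ∈ S ∧ v ∈ W

namespace IsRenewalLanguage

lemma monotone_ncard (hW : IsRenewalLanguage S p W) (h0 : 0 ∈ S) :
    Monotone fun n => (wordsOfLength W n).ncard := by
  refine monotone_nat_of_le_succ fun n => Set.ncard_le_ncard_of_injOn (departure p 0) ?_
    (fun _ _ _ _ hv => (departure_inj.1 hv).2) (wordsOfLength_finite W _)
  rintro v ⟨hlen, hv⟩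
  exact ⟨by rw [length_departure, hlen], (hW.departure_mem_iff 0 v).2 ⟨h0, hv⟩⟩

lemma one_le_ncard (hW : IsRenewalLanguage S p W) (h0 : 0 ∈ S) (n : ℕ) :
    1 ≤ (wordsOfLength W n).ncard := by
  have nil_mem : [] ∈ wordsOfLength W 0 := ⟨rfl, hW.nil_mem⟩
  exact ((Set.ncard_pos (wordsOfLength_finite W 0)).2 ⟨_, nil_mem⟩).trans_le
    (hW.monotone_ncard h0 n.zero_le)

theorem ncard_le_mul_ncard (hV : IsRenewalLanguage S p V) (hW : IsRenewalLanguage S q W)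
    (h0 : 0 ∈ S) (n : ℕ) :
    (wordsOfLength V n).ncard ≤ (n + 1) * (wordsOfLength W n).ncard := by
  classical
  induction n using Nat.strong_induction_on with
  | _ n ih =>
    have term_le : ∀ m ∈ Finset.range n, (wordsOfLength V (n - (m + 1))).ncard ≤
        n * (wordsOfLength W (n - (m + 1))).ncard := by
      intro m hm
      have hmn := Finset.mem_range.1 hm
      refine (ih (n - (m + 1)) (by omega)).trans ?_
      gcongr
      omega
    calc (wordsOfLength V n).ncard
        ≤ 1 + ∑ m ∈ Finset.range n with m ∈ S, (wordsOfLength V (n - (m + 1))).ncard :=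
          ncard_wordsOfLength_le_one_add_sum (fun m v => (hV.departure_mem_iff m v).1) n
      _ ≤ 1 + ∑ m ∈ Finset.range n with m ∈ S, n * (wordsOfLength W (n - (m + 1))).ncard := by
          gcongr with m hm
          exact term_le m (Finset.mem_of_mem_filter m hm)
      _ = 1 + n * ∑ m ∈ Finset.range n with m ∈ S, (wordsOfLength W (n - (m + 1))).ncard := by
          rw [Finset.mul_sum]
      _ ≤ (wordsOfLength W n).ncard + n * (wordsOfLength W n).ncard := by
          gcongr
          · exact hW.one_le_ncard h0 n
          · exact sum_ncard_le_ncard_wordsOfLength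
              (fun m hm v hv => (hW.departure_mem_iff m v).2 ⟨hm, hv⟩) n
      _ = (n + 1) * (wordsOfLength W n).ncard := by ring

lemma ncard_le_mul_ncard_of_departure_mem (hW : IsRenewalLanguage S p W) (h0 : 0 ∈ S)
    (hV : ∀ m v, departure q m v ∈ V → v ∈ W) (n : ℕ) :
    (wordsOfLength V n).ncard ≤ (n + 1) * (wordsOfLength W n).ncard := by
  calc (wordsOfLength V n).ncard
      ≤ 1 + ∑ m ∈ Finset.range n, (wordsOfLength W (n - (m + 1))).ncard := by
        simpa using ncard_wordsOfLength_le_one_add_sum (S := Set.univ)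
          (fun m v hv => ⟨trivial, hV m v hv⟩) n
    _ ≤ 1 + ∑ _m ∈ Finset.range n, (wordsOfLength W n).ncard := by
        gcongr 1 + ?_
        exact Finset.sum_le_sum fun m _ => hW.monotone_ncard h0 (Nat.sub_le n (m + 1))
    _ ≤ (wordsOfLength W n).ncard + n * (wordsOfLength W n).ncard := by
        rw [Finset.sum_const, Finset.card_range, smul_eq_mul]
        gcongr
        exact hW.one_le_ncard h0 n
    _ = (n + 1) * (wordsOfLength W n).ncard := by ring

end IsRenewalLanguage

end Renewal

/-! ## The lexicographic shift below a sequence -/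

section LexShift

lemma lexLE_iff_toLex_le {A : Type} [LinearOrder A] {u v : ℕ → A} :
    lexLE u v ↔ toLex u ≤ toLex v := by
  rw [le_iff_eq_or_lt]
  rfl

lemma lexLE.trans {A : Type} [LinearOrder A] {u v w : ℕ → A} (huv : lexLE u v)
    (hvw : lexLE v w) : lexLE u w :=
  lexLE_iff_toLex_le.2 ((lexLE_iff_toLex_le.1 huv).trans (lexLE_iff_toLex_le.1 hvw))

lemma lexLE.le_of_agree {A : Type} [LinearOrder A] {u v : ℕ → A} {m : ℕ} (h : lexLE u v)
    (agree : ∀ k < m, u k = v k) : u m ≤ v m := by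
  rcases h with rfl | ⟨n, agree', hlt⟩
  · exact le_rfl
  rcases lt_trichotomy m n with hmn | rfl | hnm
  · exact (agree' m hmn).le
  · exact hlt.le
  · exact absurd (agree n hnm) hlt.ne

/-- The shift of all points whose right tails are lexicographically at most `a`. The `β`-shift is
`lexShift (betaDigit β)`. -/
def lexShift {A : Type} [LinearOrder A] (a : ℕ → A) : Set (ℤ → A) :=
  {x | ∀ i : ℤ, lexLE (fun n : ℕ => x (i + n)) a}

variable {a : ℕ → Fin 2} {m : ℕ} {v : List (Fin 2)}

lemma InLang.of_departure_lexShift (h : InLang (lexShift a) (departure a m v)) :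
    a m = 1 ∧ InLang (lexShift a) v := by
  have eq_one_of_one_sub_le : ∀ c : Fin 2, 1 - c ≤ c → c = 1 := by decide
  obtain ⟨x, hx, i, hi⟩ := h
  obtain ⟨agree, depart, hv⟩ := occursAt_departure.1 hi
  have hle : x (i + m) ≤ a m := (hx i).le_of_agree agree
  exact ⟨eq_one_of_one_sub_le _ (depart ▸ hle), x, hx, _, hv⟩

lemma InLang.departure_lexShift (h0 : a 0 = 1) (ha : ∀ i, lexLE (fun n => a (i + n)) a)
    (hm : a m = 1) (hv : InLang (lexShift a) v) : InLang (lexShift a) (departure a m v) := by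
  obtain ⟨x, hx, i, hi⟩ := hv
  let s : ℤ := i - (m + 1)
  let y : ℤ → Fin 2 := fun t =>
    if i ≤ t then x t else if s ≤ t ∧ t < s + m then a (t - s).toNat else 0
  have y_right {t : ℤ} (ht : i ≤ t) : y t = x t := if_pos ht
  have y_block (k : ℕ) (hk : k < m) : y (s + k) = a k := by
    have : ¬ i ≤ s + k := by omega
    simp [y, this, hk]
  have y_end : y (s + m) = 0 := by
    have : ¬ i ≤ s + m := by omega
    simp [y, this]
  have y_left {t : ℤ} (ht : t < s) : y t = 0 := by
    have : ¬ i ≤ t := by omega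
    simp [y, this, ht.not_ge]
  have y_mem : y ∈ lexShift a := by
    intro t
    rcases le_or_gt i t with hit | hti
    · have tail_eq : (fun n : ℕ => y (t + n)) = fun n : ℕ => x (t + n) :=
        funext fun n => y_right (by omega)
      exact tail_eq ▸ hx t
    rcases lt_or_ge t s with hts | hst
    · refine .inr ⟨0, by simp, ?_⟩
      simp [y_left hts, h0]
    · obtain ⟨k, rfl⟩ := Int.le.dest hst
      -- This tail of `y` first differs from the `k`-th tail of `a` at the letter `a m = 1`.
      refine lexLE.trans (.inr ⟨m - k, fun n hn => ?_, ?_⟩) (ha k)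
      · simpa [add_assoc] using y_block (k + n) (by omega)
      · have hkm : k + (m - k) = m := by omega
        have : s + k + (m - k : ℕ) = s + m := by omega
        simp [hkm, this, y_end, hm]
  refine ⟨y, y_mem, s, occursAt_departure.2 ⟨y_block, by rw [y_end, hm, sub_self], ?_⟩⟩
  intro k hk
  have : s + m + 1 = i := by omega
  rw [this, y_right (by omega)]
  exact hi k hk

lemma zero_mem_lexShift (h0 : a 0 = 1) : 0 ∈ lexShift a :=
  fun _ => .inr ⟨0, by simp, by simp [h0]⟩

theorem isRenewalLanguage_lexShift (h0 : a 0 = 1) (ha : ∀ i, lexLE (fun n => a (i + n)) a) :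
    IsRenewalLanguage {n | a n = 1} a {w | InLang (lexShift a) w} where
  nil_mem := ⟨0, zero_mem_lexShift h0, 0, occursAt_nil⟩
  departure_mem_iff _ _ := ⟨fun h => h.of_departure_lexShift,
    fun ⟨hm, hv⟩ => InLang.departure_lexShift h0 ha hm hv⟩

end LexShift

/-! ## The words following a `1` in an `S`-gap shift -/

section SGap

variable {S : Set ℕ} {m : ℕ} {v : List (Fin 2)}

/-- The words that may follow a `1` in `X(S)`. -/
def followersOfOne (S : Set ℕ) : Set (List (Fin 2)) := {v | InLang (SGap S) (1 :: v)}

lemma splice_mem_sGap {x z : ℤ → Fin 2} {i : ℤ} (hz : z ∈ SGap S) (hx : x ∈ SGap S)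
    (hzi : z i = 1) (hxi : x i = 1) : (fun t => if t < i then z t else x t) ∈ SGap S := by
  let y : ℤ → Fin 2 := fun t => if t < i then z t else x t
  have y_right {t : ℤ} (ht : i ≤ t) : y t = x t := if_neg ht.not_gt
  have y_left {t : ℤ} (ht : t ≤ i) : y t = z t := by
    rcases ht.lt_or_eq with ht | rfl
    · exact if_pos ht
    · rw [y_right le_rfl, hxi, hzi]
  refine ⟨fun j k hjk hj hk hzero => ?_, fun hS => ⟨fun N => ?_, fun N => ?_⟩⟩
  · rcases le_or_gt k i with hki | hik
    · exact hz.1 j k hjk (y_left (hjk.le.trans hki) ▸ hj) (y_left hki ▸ hk)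
        fun t htj htk => y_left (htk.le.trans hki) ▸ hzero t htj htk
    rcases le_or_gt i j with hij | hji
    · exact hx.1 j k hjk (y_right hij ▸ hj) (y_right hik.le ▸ hk)
        fun t htj htk => y_right (hij.trans htj.le) ▸ hzero t htj htk
    · have y_i : y i = 0 := hzero i hji hik
      simp [y_right le_rfl, hxi] at y_i
  · obtain ⟨t, ht, hxt⟩ := (hx.2 hS).1 (max N i)
    exact ⟨t, (le_max_left N i).trans ht, (y_right ((le_max_right N i).trans ht)).trans hxt⟩
  · obtain ⟨t, ht, hzt⟩ := (hz.2 hS).2 (min N i)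
    exact ⟨t, ht.trans (min_le_left N i), (y_left (ht.trans (min_le_right N i))).trans hzt⟩

lemma single_gap_mem_sGap (h0 : 0 ∈ S) (hm : m ∈ S) (i : ℤ) :
    (fun t => if i - m ≤ t ∧ t < i then 0 else 1) ∈ SGap S := by
  refine ⟨fun j k hjk hj hk hzero => ?_, fun _ => ⟨fun N => ?_, fun N => ?_⟩⟩
  · simp only [ite_eq_right_iff, zero_ne_one, imp_false, ite_eq_left_iff, one_ne_zero,
      not_not] at hj hk hzero
    rcases (Int.add_one_le_of_lt hjk).eq_or_lt with rfl | hlt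
    · simpa using h0
    · have after := hzero (j + 1) (by omega) hlt
      have before := hzero (k - 1) (by omega) (by omega)
      have : (k - j - 1).toNat = m := by omega
      rwa [this]
  · exact ⟨max N i, le_max_left N i, if_neg fun h => (le_max_right N i).not_gt h.2⟩
  · exact ⟨min N (i - m - 1), min_le_left N _,
      if_neg fun h => by have := min_le_right N (i - m - 1); omega⟩

lemma of_departure_mem_followersOfOne (h : departure (fun _ => 0) m v ∈ followersOfOne S) :
    m ∈ S ∧ v ∈ followersOfOne S := by
  obtain ⟨x, hx, i, hi⟩ := h
  obtain ⟨hxi, hdep⟩ := occursAt_cons.1 hi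
  obtain ⟨hzero, hone, hv⟩ := occursAt_departure.1 hdep
  refine ⟨?_, x, hx, i + 1 + m, occursAt_cons.2 ⟨hone, hv⟩⟩
  have gap := hx.1 i (i + 1 + m) (by omega) hxi hone fun t hit htm => by
    obtain ⟨k, rfl⟩ := Int.le.dest (Int.add_one_le_of_lt hit)
    exact hzero k (by omega)
  have : (i + 1 + m - i - 1).toNat = m := by omega
  rwa [this] at gap

lemma departure_mem_followersOfOne (h0 : 0 ∈ S) (hm : m ∈ S) (hv : v ∈ followersOfOne S) :
    departure (fun _ => 0) m v ∈ followersOfOne S := by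
  obtain ⟨x, hx, i, hi⟩ := hv
  obtain ⟨hxi, hv⟩ := occursAt_cons.1 hi
  let z : ℤ → Fin 2 := fun t => if i - m ≤ t ∧ t < i then 0 else 1
  have hz : z ∈ SGap S := single_gap_mem_sGap h0 hm i
  refine ⟨_, splice_mem_sGap hz hx (if_neg (by omega)) hxi, i - m - 1,
    occursAt_cons.2 ⟨?_, occursAt_departure.2 ⟨fun k hk => ?_, ?_, fun k hk => ?_⟩⟩⟩
  · exact (if_pos (by omega)).trans (if_neg (by omega))
  · exact (if_pos (by omega)).trans (if_pos (by omega))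
  · have : i - m - 1 + 1 + m = i := by omega
    simpa [this] using hxi
  · have : i - m - 1 + 1 + m = i := by omega
    rw [this]
    exact (if_neg (by omega)).trans (hv k hk)

theorem isRenewalLanguage_followersOfOne (h0 : 0 ∈ S) :
    IsRenewalLanguage S (fun _ => 0) (followersOfOne S) where
  nil_mem := ⟨_, single_gap_mem_sGap h0 h0 0, 0, occursAt_cons.2 ⟨by simp, occursAt_nil⟩⟩
  departure_mem_iff _ _ := ⟨of_departure_mem_followersOfOne,
    fun ⟨hm, hv⟩ => departure_mem_followersOfOne h0 hm hv⟩

lemma ncard_followersOfOne_le_wordCount (S : Set ℕ) (n : ℕ) :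
    (wordsOfLength (followersOfOne S) n).ncard ≤ wordCount (SGap S) n :=
  Set.ncard_le_ncard (fun _ hw => ⟨hw.1, InLang.of_append_right (u := [1]) hw.2⟩)
    (wordsOfLength_finite _ n)

lemma wordCount_sGap_le_mul_ncard (h0 : 0 ∈ S) (n : ℕ) :
    wordCount (SGap S) n ≤ (n + 1) * (wordsOfLength (followersOfOne S) n).ncard := by
  have mem_of_departure (m : ℕ) (v : List (Fin 2))
      (h : InLang (SGap S) (departure (fun _ => 0) m v)) : v ∈ followersOfOne S :=
    InLang.of_append_right h
  exact (isRenewalLanguage_followersOfOne h0).ncard_le_mul_ncard_of_departure_mem h0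
    mem_of_departure n

end SGap

/-! ## The expansion of `1` -/

section Expansion

variable {β y z : ℝ}

/-- The first digit of the greedy `β`-expansion of `y` with digits in `{0, 1}`. -/
noncomputable def greedyDigit (β y : ℝ) : Fin 2 := if 1 ≤ β * y then 1 else 0

/-- The `β`-transformation: the greedy expansion of `greedyMap β y` is that of `y` without its first
digit. -/
noncomputable def greedyMap (β y : ℝ) : ℝ := β * y - (greedyDigit β y : ℕ)

/-- The greedy `β`-expansion of `y` with digits in `{0, 1}`. -/
noncomputable def greedyExpansion (β y : ℝ) (n : ℕ) : Fin 2 := greedyDigit β ((greedyMap β)^[n] y)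

lemma greedyDigit_mono (hβ : 0 ≤ β) : Monotone (greedyDigit β) := by
  intro y z hyz
  have : β * y ≤ β * z := by gcongr
  unfold greedyDigit
  split_ifs
  · exact le_rfl
  · linarith
  · exact zero_le_one
  · exact le_rfl

lemma greedyMap_le_one (hβ0 : 0 ≤ β) (hβ2 : β ≤ 2) (hy : y ≤ 1) : greedyMap β y ≤ 1 := by
  unfold greedyMap greedyDigit
  split_ifs with h
  · calc β * y - ((1 : Fin 2) : ℕ) ≤ β * 1 - 1 := by
          rw [Fin.val_one, Nat.cast_one]
          gcongr
      _ ≤ 1 := by linarith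
  · simpa using (not_le.1 h).le

lemma greedyExpansion_iterate (β y : ℝ) (i : ℕ) :
    greedyExpansion β ((greedyMap β)^[i] y) = fun n => greedyExpansion β y (i + n) := by
  funext n
  rw [greedyExpansion, greedyExpansion, ← Function.iterate_add_apply, add_comm]

lemma iterate_greedyMap_sub_of_agree {n : ℕ}
    (agree : ∀ k < n, greedyExpansion β y k = greedyExpansion β z k) :
    (greedyMap β)^[n] z - (greedyMap β)^[n] y = β ^ n * (z - y) := by
  induction n with
  | zero => simp
  | succ n ih =>
    have digit_eq : greedyDigit β ((greedyMap β)^[n] y) = greedyDigit β ((greedyMap β)^[n] z) :=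
      agree n n.lt_succ_self
    rw [Function.iterate_succ_apply', Function.iterate_succ_apply', greedyMap, greedyMap, digit_eq,
      pow_succ', mul_assoc, ← ih fun k hk => agree k (hk.trans n.lt_succ_self)]
    ring

lemma lexLE_greedyExpansion (hβ : 0 ≤ β) (hyz : y ≤ z) :
    lexLE (greedyExpansion β y) (greedyExpansion β z) := by
  by_contra hlex
  obtain ⟨n, agree, hlt⟩ := lt_of_not_ge fun h => hlex (lexLE_iff_toLex_le.2 h)
  have iterate_le : (greedyMap β)^[n] y ≤ (greedyMap β)^[n] z := by
    rw [← sub_nonneg, iterate_greedyMap_sub_of_agree fun k hk => (agree k hk).symm]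
    exact mul_nonneg (pow_nonneg hβ n) (sub_nonneg.2 hyz)
  exact hlt.not_ge (greedyDigit_mono hβ iterate_le)

lemma greedyExpansion_one_shift_le (hβ0 : 0 ≤ β) (hβ2 : β ≤ 2) (i : ℕ) :
    lexLE (fun n => greedyExpansion β 1 (i + n)) (greedyExpansion β 1) := by
  have iterate_le_one : (greedyMap β)^[i] 1 ≤ 1 := by
    induction i with
    | zero => exact le_rfl
    | succ i ih =>
      rw [Function.iterate_succ_apply']
      exact greedyMap_le_one hβ0 hβ2 ih
  rw [← greedyExpansion_iterate]
  exact lexLE_greedyExpansion hβ0 iterate_le_one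

lemma inv_pow_succ_le_iff (hβ : 0 < β) (n : ℕ) :
    β⁻¹ ^ (n + 1) ≤ y ↔ 1 ≤ β * (β ^ n * y) := by
  rw [← mul_assoc, ← pow_succ', inv_pow, inv_le_iff_one_le_mul₀' (pow_pos hβ _)]

lemma iterate_greedyMap_one (hβ : 0 < β) (n : ℕ) :
    (greedyMap β)^[n] 1 = β ^ n * betaRem β n := by
  induction n with
  | zero => simp [betaRem]
  | succ n ih =>
    rw [Function.iterate_succ_apply', ih, greedyMap, greedyDigit, betaRem]
    simp only [inv_pow_succ_le_iff hβ]
    split_ifs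
    · have : β ^ (n + 1) * β⁻¹ ^ (n + 1) = 1 := by
        rw [← mul_pow, mul_inv_cancel₀ hβ.ne', one_pow]
      rw [mul_sub, this, pow_succ']
      simp [mul_assoc]
    · simp [pow_succ', mul_assoc]

lemma betaDigit_eq_greedyExpansion (hβ : 0 < β) : betaDigit β = greedyExpansion β 1 := by
  funext n
  rw [betaDigit, greedyExpansion, greedyDigit, iterate_greedyMap_one hβ]
  simp only [inv_pow_succ_le_iff hβ]

end Expansion

theorem beta_entropy_eq_assoc_sgap_general {a : ℕ → Fin 2} (h0 : a 0 = 1)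
    (ha : ∀ i, lexLE (fun n => a (i + n)) a) :
    ∃ h : ℝ, HasEntropy (lexShift a) h ∧ HasEntropy (SGap {n | a n = 1}) h := by
  have lex := isRenewalLanguage_lexShift h0 ha
  have gap := isRenewalLanguage_followersOfOne (S := {n | a n = 1}) h0
  obtain ⟨h, hh⟩ := exists_hasEntropy (lexShift a)
  refine ⟨h, hh,
    hh.of_wordCount_le_mul (tendsto_log_succ_pow_div_atTop 2) (fun n => ?_) (fun n => ?_)⟩
  · calc wordCount (lexShift a) n
        ≤ (n + 1) * (wordsOfLength (followersOfOne {n | a n = 1}) n).ncard :=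
          lex.ncard_le_mul_ncard gap h0 n
      _ ≤ (n + 1) ^ 2 * wordCount (SGap {n | a n = 1}) n :=
          Nat.mul_le_mul (Nat.le_self_pow two_ne_zero _) (ncard_followersOfOne_le_wordCount _ n)
  · calc wordCount (SGap {n | a n = 1}) n
        ≤ (n + 1) * (wordsOfLength (followersOfOne {n | a n = 1}) n).ncard :=
          wordCount_sGap_le_mul_ncard h0 n
      _ ≤ (n + 1) * ((n + 1) * wordCount (lexShift a) n) := by
          gcongr
          exact gap.ncard_le_mul_ncard lex h0 n
      _ = (n + 1) ^ 2 * wordCount (lexShift a) n := by ring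

/-- For every `β ∈ (1,2]`, the β-shift `X_β` and its associated S-gap
shift `ASS(X_β) = X(S)`, `S = {i - 1 : a_i = 1}`, have equal topological entropy. -/
theorem beta_entropy_eq_assoc_sgap
    (β : ℝ) (hβ1 : 1 < β) (hβ2 : β ≤ 2) :
    ∃ h : ℝ, HasEntropy (betaShift β) h ∧ HasEntropy (SGap (assocS β)) h := by
  have expansion := betaDigit_eq_greedyExpansion (zero_lt_one.trans hβ1)
  have h0 : betaDigit β 0 = 1 := by simp [expansion, greedyExpansion, greedyDigit, hβ1.le]
  have ha : ∀ i, lexLE (fun n => betaDigit β (i + n)) (betaDigit β) := by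
    simpa only [expansion] using greedyExpansion_one_shift_le (zero_le_one.trans hβ1.le) hβ2
  exact beta_entropy_eq_assoc_sgap_general h0 ha
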